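/- The split composite likelihood ratio test controls the Type I error at level a for all sample sizes: for every n ∈ ℕ and a ∈ (0,1), sup_{θ*∈Θ_0} Pr_{θ*}(V_{α,β,n}^0 > 1/a) ≤ a. -/

import Mathlib

open MeasureTheory ENNReal
open scoped BigOperators Classical

noncomputable section

/-- Division in `ℝ≥0∞` with the convention that the ratio is `0` when the
denominator is `0`. -/
def safeDiv (a b : ℝ≥0∞) : ℝ≥0∞ := if b = 0 then 0 else a / b

variable {d : ℕ} {π : Fin d → Type*} [∀ i, MeasurableSpace (π i)]

/-- The marginal density on the coordinates in `S`, obtained by integrating a density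
out over the coordinates in `[d] \ S` (as a function of the full vector, depending only
on the coordinates in `S`). -/
def marginal (μ : ∀ i, Measure (π i)) (S : Finset (Fin d))
    (f : (∀ i, π i) → ℝ≥0∞) : (∀ i, π i) → ℝ≥0∞ :=
  MeasureTheory.lmarginal μ Sᶜ f

/-- The conditional density of the coordinates in `T1` given the coordinates in `T2`,
with the convention that the ratio is `0` when the denominator is `0`. -/
def condDens (μ : ∀ i, Measure (π i)) (T1 T2 : Finset (Fin d))
    (f : (∀ i, π i) → ℝ≥0∞) (x : ∀ i, π i) : ℝ≥0∞ :=
  safeDiv (marginal μ (T1 ∪ T2) f x) (marginal μ T2 f x)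

/-- `𝕊_d`: the nonempty subsets of `[d]`. -/
abbrev Sd (d : ℕ) := {S : Finset (Fin d) // S.Nonempty}

/-- `𝕋_d`: ordered pairs of disjoint nonempty subsets of `[d]`. -/
abbrev Td (d : ℕ) := {T : Finset (Fin d) × Finset (Fin d) //
  T.1.Nonempty ∧ T.2.Nonempty ∧ Disjoint T.1 T.2}

/-- The individual composite likelihood
`p_{α,β}(x;θ) = ∏_S p_S(x_S;θ)^(α_S/γ) ∏_T p(x_{T←}|x_{T→};θ)^(β_T/γ)`,
where `f = p(·;θ)` is the joint density. -/
def compLik (μ : ∀ i, Measure (π i)) (α : Sd d → ℝ) (β : Td d → ℝ) (γ : ℝ)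
    (f : (∀ i, π i) → ℝ≥0∞) (x : ∀ i, π i) : ℝ≥0∞ :=
  (∏ S : Sd d, marginal μ S.1 f x ^ (α S / γ)) *
  (∏ T : Td d, condDens μ T.1.1 T.1.2 f x ^ (β T / γ))


lemma marginal_update (μ : ∀ i, Measure (π i)) (S s : Finset (Fin d)) (h : Disjoint s S)
    (f : (∀ i, π i) → ℝ≥0∞) (x : ∀ i, π i) (y : ∀ i : s, π i) :
    marginal μ S f (Function.updateFinset x s y) = marginal μ S f x := by
  unfold marginal
  apply lmarginal_congr
  intro i hi
  have hi' : i ∈ S := by simpa using hi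
  have : i ∉ s := fun h' => (Finset.disjoint_left.1 h h') hi'
  simp [Function.updateFinset, this]

lemma marginal_meas (μ : ∀ i, Measure (π i)) [∀ i, SigmaFinite (μ i)] (S : Finset (Fin d))
    {f : (∀ i, π i) → ℝ≥0∞} (hf : Measurable f) : Measurable (marginal μ S f) :=
  hf.lmarginal μ

lemma lmarginal_pull (μ : ∀ i, Measure (π i)) [∀ i, SigmaFinite (μ i)] (s : Finset (Fin d))
    {f : (∀ i, π i) → ℝ≥0∞} (hf : Measurable f) (g : (∀ i, π i) → ℝ≥0∞)
    (hg : ∀ x (y : ∀ i : s, π i), g (Function.updateFinset x s y) = g x) :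
    lmarginal μ s (fun x => f x * g x) = fun x => lmarginal μ s f x * g x := by
  ext x
  simp only [lmarginal, hg]
  exact lintegral_mul_const _ (hf.comp measurable_updateFinset)

lemma lint_split (μ : ∀ i, Measure (π i)) [∀ i, SigmaFinite (μ i)] (S : Finset (Fin d))
    {f : (∀ i, π i) → ℝ≥0∞} (hf : Measurable f) (x : ∀ i, π i) :
    ∫⁻ x, f x ∂(Measure.pi μ) = lmarginal μ S (marginal μ S f) x := by
  rw [lintegral_eq_lmarginal_univ x, marginal, ← lmarginal_union μ f hf disjoint_compl_right,
    Finset.union_compl]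

lemma lint_pull (μ : ∀ i, Measure (π i)) [∀ i, SigmaFinite (μ i)] (S : Finset (Fin d))
    {f : (∀ i, π i) → ℝ≥0∞} (hf : Measurable f) (g : (∀ i, π i) → ℝ≥0∞) (hgm : Measurable g)
    (hg : ∀ x (y : ∀ i : (Sᶜ : Finset (Fin d)), π i), g (Function.updateFinset x Sᶜ y) = g x)
    (x : ∀ i, π i) :
    ∫⁻ x, f x * g x ∂(Measure.pi μ) = lmarginal μ S (fun x => marginal μ S f x * g x) x := by
  rw [lint_split μ S (f := fun x => f x * g x) (hf.mul hgm) x]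
  congr 1
  exact lmarginal_pull μ Sᶜ hf g hg

lemma exp_marg (μ : ∀ i, Measure (π i)) [∀ i, SigmaFinite (μ i)] (S : Finset (Fin d))
    {q r : (∀ i, π i) → ℝ≥0∞} (hq : Measurable q) (hr : Measurable r)
    (hr1 : ∫⁻ x, r x ∂(Measure.pi μ) = 1) (x : ∀ i, π i) :
    ∫⁻ x, q x * (marginal μ S r x / marginal μ S q x) ∂(Measure.pi μ) ≤ 1 := by
  have h := fun f => marginal_update μ S Sᶜ disjoint_compl_left f
  rw [lint_pull μ S hq (fun x => marginal μ S r x / marginal μ S q x) ((marginal_meas μ S hr).div (marginal_meas μ S hq))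
    (by intro x y; simp only [h]) x, ← hr1, lint_split μ S hr x]
  apply lmarginal_mono
  intro z
  exact ENNReal.mul_div_le

lemma safeDiv_meas {A : Type*} [MeasurableSpace A] {f g : A → ℝ≥0∞} (hf : Measurable f)
    (hg : Measurable g) : Measurable (fun x => safeDiv (f x) (g x)) := by
  unfold safeDiv
  exact Measurable.ite (hg (measurableSet_singleton 0)) measurable_const (hf.div hg)

lemma condDens_meas (μ : ∀ i, Measure (π i)) [∀ i, SigmaFinite (μ i)] (T1 T2 : Finset (Fin d))
    {r : (∀ i, π i) → ℝ≥0∞} (hr : Measurable r) : Measurable (condDens μ T1 T2 r) :=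
  safeDiv_meas (marginal_meas μ _ hr) (marginal_meas μ _ hr)

lemma safeDiv_le (a b : ℝ≥0∞) : safeDiv a b ≤ a / b := by
  unfold safeDiv; split_ifs <;> simp

lemma exp_cond (μ : ∀ i, Measure (π i)) [∀ i, SigmaFinite (μ i)] (T1 T2 : Finset (Fin d))
    (hT : Disjoint T1 T2)
    {q r : (∀ i, π i) → ℝ≥0∞} (hq : Measurable q) (hr : Measurable r)
    (hq1 : ∫⁻ x, q x ∂(Measure.pi μ) = 1) (x : ∀ i, π i) :
    ∫⁻ x, q x * (condDens μ T1 T2 r x * marginal μ T2 q x / marginal μ (T1 ∪ T2) q x)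
      ∂(Measure.pi μ) ≤ 1 := by
  have hU := fun f => marginal_update μ (T1 ∪ T2) (T1 ∪ T2)ᶜ disjoint_compl_left f
  have h2 := fun f => marginal_update μ T2 (T1 ∪ T2)ᶜ
    (disjoint_compl_left.mono_right Finset.subset_union_right) f
  have h21 := fun f => marginal_update μ T2 T1 hT f
  rw [lint_pull μ (T1 ∪ T2) hq (fun x => condDens μ T1 T2 r x * marginal μ T2 q x /
    marginal μ (T1 ∪ T2) q x) (((condDens_meas μ T1 T2 hr).mul (marginal_meas μ _ hq)).div
    (marginal_meas μ _ hq)) (by intro x y; simp only [hU, h2, condDens]) x]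
  have mq := marginal_meas μ T2 hq
  have mr := marginal_meas μ T2 hr
  have mrU := marginal_meas μ (T1 ∪ T2) hr
  calc _ ≤ lmarginal μ (T1 ∪ T2) (fun x => marginal μ (T1 ∪ T2) r x *
              ((marginal μ T2 r x)⁻¹ * marginal μ T2 q x)) x := by
        apply lmarginal_mono
        intro z
        refine ENNReal.mul_div_le.trans ?_
        dsimp only
        rw [← mul_assoc]
        gcongr
        rw [← div_eq_mul_inv]
        exact safeDiv_le _ _
    _ = lmarginal μ T2 (fun x => marginal μ T2 r x *
              ((marginal μ T2 r x)⁻¹ * marginal μ T2 q x)) x := by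
        rw [lmarginal_union' μ _ (by fun_prop) hT, lmarginal_pull μ T1 mrU _
          (by intro x y; simp only [h21])]
        have : lmarginal μ T1 (marginal μ (T1 ∪ T2) r) = marginal μ T2 r := by
          unfold marginal
          rw [← lmarginal_union μ r hr
            (disjoint_compl_right.mono_left Finset.subset_union_left)]
          congr 1
          ext i
          have : i ∈ T1 → i ∉ T2 := fun h => Finset.disjoint_left.1 hT h
          simp
          tauto
        rw [this]
    _ ≤ lmarginal μ T2 (marginal μ T2 q) x := by
        apply lmarginal_mono
        intro z
        dsimp only
        rw [← mul_assoc]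
        calc _ ≤ 1 * marginal μ T2 q z := by
              gcongr
              exact ENNReal.mul_inv_le_one _
          _ = _ := one_mul _
    _ = 1 := by rw [← lint_split μ T2 hq x, hq1]

lemma ae_marg (μ : ∀ i, Measure (π i)) [∀ i, SigmaFinite (μ i)] (S : Finset (Fin d))
    {q : (∀ i, π i) → ℝ≥0∞} (hq : Measurable q)
    (hq1 : ∫⁻ x, q x ∂(Measure.pi μ) = 1) (x : ∀ i, π i) :
    ∀ᵐ z ∂((Measure.pi μ).withDensity q), marginal μ S q z ≠ 0 ∧ marginal μ S q z ≠ ∞ := by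
  have hm := marginal_meas μ S hq
  let A : Set ℝ≥0∞ := {0, ∞}
  have hA : MeasurableSet A := (Set.toFinite A).measurableSet
  let g : (∀ i, π i) → ℝ≥0∞ := fun z => A.indicator 1 (marginal μ S q z)
  have hg : Measurable g := (measurable_one.indicator hA).comp hm
  have h0 : ∫⁻ z, q z * g z ∂(Measure.pi μ) = 0 := by
    rw [lint_pull μ S hq g hg (by
      intro x y; simp only [g, marginal_update μ S Sᶜ disjoint_compl_left]) x]
    unfold lmarginal
    apply lintegral_eq_zero_of_ae_eq_zero
    have h1 : ∫⁻ y, marginal μ S q (Function.updateFinset x S y)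
        ∂(Measure.pi fun i : S => μ i) ≠ ∞ := by
      have := lint_split μ S hq x
      unfold lmarginal at this
      rw [← this, hq1]; simp
    filter_upwards [ae_lt_top (hm.comp measurable_updateFinset) h1] with y hy
    simp only [Function.comp] at hy
    by_cases hz : marginal μ S q (Function.updateFinset x S y) = 0
    · simp [hz]
    · simp [g, A, hz, hy.ne]
  rw [lintegral_eq_zero_iff (f := fun z => q z * g z) (hq.mul hg)] at h0
  rw [ae_withDensity_iff hq]
  filter_upwards [h0] with z hz hqz
  have : g z = 0 := by simpa [hqz] using hz
  simpa [g, A] using this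

lemma cond_ne (μ : ∀ i, Measure (π i)) (T1 T2 : Finset (Fin d)) (q : (∀ i, π i) → ℝ≥0∞)
    (z : ∀ i, π i) (h : ∀ S, marginal μ S q z ≠ 0 ∧ marginal μ S q z ≠ ∞) :
    condDens μ T1 T2 q z ≠ 0 ∧ condDens μ T1 T2 q z ≠ ∞ := by
  unfold condDens safeDiv
  rw [if_neg (h T2).1]
  exact ⟨ENNReal.div_ne_zero.2 ⟨(h _).1, (h _).2⟩, ENNReal.div_ne_top (h _).2 (h _).1⟩

lemma compLik_ne (μ : ∀ i, Measure (π i)) (α : Sd d → ℝ) (β : Td d → ℝ) (γ : ℝ)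
    (q : (∀ i, π i) → ℝ≥0∞)
    (z : ∀ i, π i) (h : ∀ S, marginal μ S q z ≠ 0 ∧ marginal μ S q z ≠ ∞) :
    compLik μ α β γ q z ≠ 0 := by
  have hr : ∀ (a : ℝ≥0∞) (t : ℝ), a ≠ 0 ∧ a ≠ ∞ → a ^ t ≠ 0 := by
    intro a t h
    exact (ENNReal.rpow_pos (pos_iff_ne_zero.2 h.1) h.2).ne'
  unfold compLik
  refine mul_ne_zero (Finset.prod_ne_zero_iff.2 fun S _ => hr _ _ (h _))
    (Finset.prod_ne_zero_iff.2 fun T _ => hr _ _ (cond_ne μ _ _ q z h))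

lemma ratio_exp (μ : ∀ i, Measure (π i)) [∀ i, SigmaFinite (μ i)]
    (α : Sd d → ℝ) (β : Td d → ℝ)
    (hα : ∀ S, 0 ≤ α S) (hβ : ∀ T, 0 ≤ β T)
    (γ : ℝ) (hγ : γ = ∑ S, α S + ∑ T, β T) (hγpos : 0 < γ)
    {q r : (∀ i, π i) → ℝ≥0∞} (hq : Measurable q) (hr : Measurable r)
    (hq1 : ∫⁻ x, q x ∂(Measure.pi μ) = 1) (hr1 : ∫⁻ x, r x ∂(Measure.pi μ) = 1)
    (x : ∀ i, π i) :
    ∫⁻ z, compLik μ α β γ r z / compLik μ α β γ q z ∂((Measure.pi μ).withDensity q) ≤ 1 := by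
  let F : Sd d ⊕ Td d → (∀ i, π i) → ℝ≥0∞ := Sum.elim
    (fun S z => marginal μ S.1 r z / marginal μ S.1 q z)
    (fun T z => condDens μ T.1.1 T.1.2 r z * marginal μ T.1.2 q z
      / marginal μ (T.1.1 ∪ T.1.2) q z)
  let w : Sd d ⊕ Td d → ℝ := Sum.elim (fun S => α S / γ) (fun T => β T / γ)
  have hF : ∀ i, Measurable (F i) := by
    rintro (S | T)
    · exact (marginal_meas μ _ hr).div (marginal_meas μ _ hq)
    · exact ((condDens_meas μ _ _ hr).mul (marginal_meas μ _ hq)).div (marginal_meas μ _ hq)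
  have hw0 : ∀ i, 0 ≤ w i := by
    rintro (S | T)
    · exact div_nonneg (hα S) hγpos.le
    · exact div_nonneg (hβ T) hγpos.le
  have hw : ∑ i, w i = 1 := by
    simp only [w, Fintype.sum_sum_type, Sum.elim_inl, Sum.elim_inr]
    rw [← Finset.sum_div, ← Finset.sum_div, ← add_div, ← hγ, div_self hγpos.ne']
  have hall : ∀ᵐ z ∂((Measure.pi μ).withDensity q),
      ∀ S, marginal μ S q z ≠ 0 ∧ marginal μ S q z ≠ ∞ :=
    ae_all_iff.2 fun S => ae_marg μ S hq hq1 x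
  calc _ = ∫⁻ z, ∏ i, F i z ^ w i ∂((Measure.pi μ).withDensity q) := by
        apply lintegral_congr_ae
        filter_upwards [hall] with z hz
        have hrne : ∀ (a : ℝ≥0∞) (t : ℝ), a ≠ 0 ∧ a ≠ ∞ → a ^ t ≠ 0 ∧ a ^ t ≠ ∞ := by
          intro a t h
          exact ⟨(ENNReal.rpow_pos (pos_iff_ne_zero.2 h.1) h.2).ne',
            ENNReal.rpow_ne_top_of_ne_zero h.1 h.2⟩
        have e1 : ∏ i, F i z ^ w i = (∏ S : Sd d, (marginal μ S.1 r z / marginal μ S.1 q z) ^ (α S / γ))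
            * ∏ T : Td d, (condDens μ T.1.1 T.1.2 r z / condDens μ T.1.1 T.1.2 q z) ^ (β T / γ) := by
          rw [Fintype.prod_sum_type]
          simp only [F, w, Sum.elim_inl, Sum.elim_inr]
          congr 1
          apply Finset.prod_congr rfl
          intro T _
          congr 1
          conv_rhs => rw [condDens.eq_1 μ _ _ q, safeDiv, if_neg (hz _).1]
          rw [div_eq_mul_inv, div_eq_mul_inv, div_eq_mul_inv,
            ENNReal.mul_inv (Or.inl (hz _).1) (Or.inl (hz _).2), inv_inv, mul_assoc,
            mul_comm (marginal μ T.1.2 q z)]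
        rw [e1]
        have e2 : ∏ S : Sd d, (marginal μ S.1 r z / marginal μ S.1 q z) ^ (α S / γ)
            = (∏ S : Sd d, marginal μ S.1 r z ^ (α S / γ)) /
              (∏ S : Sd d, marginal μ S.1 q z ^ (α S / γ)) := by
          rw [← ENNReal.prod_div_distrib_of_ne_zero (fun S _ => (hrne _ _ (hz _)).1)]
          exact Finset.prod_congr rfl fun S _ =>
            ENNReal.div_rpow_of_nonneg _ _ (div_nonneg (hα S) hγpos.le)
        have e3 : ∏ T : Td d, (condDens μ T.1.1 T.1.2 r z / condDens μ T.1.1 T.1.2 q z) ^ (β T / γ)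
            = (∏ T : Td d, condDens μ T.1.1 T.1.2 r z ^ (β T / γ)) /
              (∏ T : Td d, condDens μ T.1.1 T.1.2 q z ^ (β T / γ)) := by
          rw [← ENNReal.prod_div_distrib_of_ne_zero
            (fun T _ => (hrne _ _ (cond_ne μ _ _ q z hz)).1)]
          exact Finset.prod_congr rfl fun T _ =>
            ENNReal.div_rpow_of_nonneg _ _ (div_nonneg (hβ T) hγpos.le)
        rw [e2, e3]
        unfold compLik
        have n1 : ∏ S : Sd d, marginal μ S.1 q z ^ (α S / γ) ≠ 0 :=
          Finset.prod_ne_zero_iff.2 fun S _ => (hrne _ _ (hz _)).1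
        have n2 : ∏ S : Sd d, marginal μ S.1 q z ^ (α S / γ) ≠ ∞ :=
          ENNReal.prod_ne_top fun S _ => (hrne _ _ (hz _)).2
        rw [div_eq_mul_inv, div_eq_mul_inv, div_eq_mul_inv,
          ENNReal.mul_inv (Or.inl n1) (Or.inl n2)]
        ring
    _ ≤ ∏ i, (∫⁻ z, F i z ∂((Measure.pi μ).withDensity q)) ^ w i :=
        ENNReal.lintegral_prod_norm_pow_le _ (fun i _ => (hF i).aemeasurable) hw
          (fun i _ => hw0 i)
    _ ≤ 1 := by
        apply Finset.prod_le_one'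
        intro i _
        refine ENNReal.rpow_le_one ?_ (hw0 i)
        rw [lintegral_withDensity_eq_lintegral_mul _ hq (hF i)]
        rcases i with S | T
        · exact exp_marg μ S.1 hq hr hr1 x
        · exact exp_cond μ T.1.1 T.1.2 T.2.2.2 hq hr hq1 x

lemma marginal_joint (μ : ∀ i, Measure (π i)) [∀ i, SigmaFinite (μ i)]
    {Θ : Type*} [MeasurableSpace Θ]
    (p : Θ → (∀ i, π i) → ℝ≥0∞) (hp : Measurable (Function.uncurry p)) (S : Finset (Fin d)) :
    Measurable (fun y : Θ × (∀ i, π i) => marginal μ S (p y.1) y.2) := by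
  unfold marginal lmarginal
  refine Measurable.lintegral_prod_right
    (f := fun (y : Θ × (∀ i, π i)) (v : ∀ i : (Sᶜ : Finset (Fin d)), π i) =>
      p y.1 (Function.updateFinset y.2 Sᶜ v)) ?_
  have h : Measurable (fun u : (Θ × (∀ i, π i)) × (∀ i : (Sᶜ : Finset (Fin d)), π i) =>
      (u.1.1, Function.updateFinset u.1.2 Sᶜ u.2)) :=
    (measurable_fst.comp measurable_fst).prodMk (measurable_updateFinset'.comp
      ((measurable_snd.comp measurable_fst).prodMk measurable_snd))
  exact hp.comp h

lemma compLik_joint (μ : ∀ i, Measure (π i)) [∀ i, SigmaFinite (μ i)]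
    (α : Sd d → ℝ) (β : Td d → ℝ) (γ : ℝ) {Θ : Type*} [MeasurableSpace Θ]
    (p : Θ → (∀ i, π i) → ℝ≥0∞) (hp : Measurable (Function.uncurry p)) :
    Measurable (fun y : Θ × (∀ i, π i) => compLik μ α β γ (p y.1) y.2) := by
  unfold compLik condDens
  refine Measurable.mul (Finset.measurable_prod _ fun S _ => ?_)
    (Finset.measurable_prod _ fun T _ => ?_)
  · exact (marginal_joint μ p hp _).pow_const _
  · exact (safeDiv_meas (marginal_joint μ p hp _) (marginal_joint μ p hp _)).pow_const _

/-- The split composite likelihood ratio test controls the Type I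
error at level `a` for all sample sizes: for every `n ∈ ℕ` and `a ∈ (0,1)`,
`sup_{θ*∈Θ₀} Pr_{θ*}(V_{α,β,n}^0 > 1/a) ≤ a`. -/
theorem split_CLRT_type_I_error
    {d : ℕ} (hd : 1 ≤ d)
    {π : Fin d → Type*} [∀ i, MeasurableSpace (π i)]
    (μ : ∀ i, Measure (π i)) [∀ i, SigmaFinite (μ i)]
    {Θ : Type*} [MeasurableSpace Θ]
    (p : Θ → (∀ i, π i) → ℝ≥0∞)
    (hp_meas : Measurable (Function.uncurry p))
    (hp_prob : ∀ θ : Θ, ∫⁻ x, p θ x ∂(Measure.pi μ) = 1)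
    (α : Sd d → ℝ) (β : Td d → ℝ)
    (hα : ∀ S, 0 ≤ α S) (hβ : ∀ T, 0 ≤ β T)
    (γ : ℝ) (hγ : γ = ∑ S, α S + ∑ T, β T) (hγpos : 0 < γ)
    {Ω : Type*} [MeasurableSpace Ω]
    (Pr : Measure Ω) [IsProbabilityMeasure Pr]
    (θstar : Θ) (n : ℕ)
    -- the two halves `X_n^0` and `X_n^1` of the i.i.d. sample of size `2n`
    (X0 X1 : Fin n → Ω → (∀ i, π i))
    (hX0 : ∀ j, Measurable (X0 j)) (hX1 : ∀ j, Measurable (X1 j))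
    -- the `2n` observations are i.i.d. with density `p(·;θ*)` w.r.t. `μ`
    (hlaw : Measure.map (fun ω => (fun j => X0 j ω, fun j => X1 j ω)) Pr
      = (Measure.pi fun _ : Fin n => (Measure.pi μ).withDensity (p θstar)).prod
          (Measure.pi fun _ : Fin n => (Measure.pi μ).withDensity (p θstar)))
    -- the estimators `θ̃_n^0`, `θ̃_n^1` are measurable functions of `X_n^0`, `X_n^1` alone
    (t0 t1 : (Fin n → ∀ i, π i) → Θ)
    (ht0 : Measurable t0) (ht1 : Measurable t1)
    -- null hypothesis parameter space and maximum composite likelihood estimators over `Θ₀`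
    (Θ0 : Set Θ)
    (θhat0 θhat1 : Ω → Θ)
    (hθhat0_meas : @Measurable Ω Θ
      (MeasurableSpace.comap (fun ω => fun j => X0 j ω)
        (inferInstance : MeasurableSpace (Fin n → ∀ i, π i))) _ θhat0)
    (hθhat1_meas : @Measurable Ω Θ
      (MeasurableSpace.comap (fun ω => fun j => X1 j ω)
        (inferInstance : MeasurableSpace (Fin n → ∀ i, π i))) _ θhat1)
    (hθhat0_mem : ∀ ω, θhat0 ω ∈ Θ0) (hθhat1_mem : ∀ ω, θhat1 ω ∈ Θ0)
    (hθhat0_max : ∀ ω, ∀ θ ∈ Θ0,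
      (∏ j : Fin n, compLik μ α β γ (p θ) (X0 j ω))
        ≤ ∏ j : Fin n, compLik μ α β γ (p (θhat0 ω)) (X0 j ω))
    (hθhat1_max : ∀ ω, ∀ θ ∈ Θ0,
      (∏ j : Fin n, compLik μ α β γ (p θ) (X1 j ω))
        ≤ ∏ j : Fin n, compLik μ α β γ (p (θhat1 ω)) (X1 j ω))
    -- the DGP parameter lies in the null hypothesis set (Type I error regime)
    (hθstar : θstar ∈ Θ0)
    (a : ℝ) (ha0 : 0 < a) (ha1 : a < 1) :
    Pr {ω | 1 / ENNReal.ofReal a < safeDiv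
        (∏ j : Fin n, compLik μ α β γ (p (t1 fun j' => X1 j' ω)) (X0 j ω))
        (∏ j : Fin n, compLik μ α β γ (p (θhat0 ω)) (X0 j ω))}
      ≤ ENNReal.ofReal a := by
  classical
  set q := p θstar with hqdef
  have hmp : ∀ θ, Measurable (p θ) := fun θ => hp_meas.comp measurable_prodMk_left
  have hq : Measurable q := hmp θstar
  set Q := (Measure.pi μ).withDensity q with hQ
  have : IsProbabilityMeasure Q := ⟨by
    rw [hQ, withDensity_apply _ MeasurableSet.univ, Measure.restrict_univ]; exact hp_prob _⟩
  obtain ⟨x⟩ : Nonempty (∀ i, π i) := by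
    by_contra h
    rw [not_nonempty_iff] at h
    have := hp_prob θstar
    simp at this
  have hCj := compLik_joint μ α β γ p hp_meas
  have hCq : Measurable (compLik μ α β γ q) :=
    hCj.comp (measurable_prodMk_left (x := θstar))
  let E := Fin n → ∀ i, π i
  let F : E × E → ℝ≥0∞ := fun y =>
    (∏ j : Fin n, compLik μ α β γ (p (t1 y.2)) (y.1 j)) / ∏ j : Fin n, compLik μ α β γ q (y.1 j)
  have hF : Measurable F := by
    refine Measurable.div (Finset.measurable_prod _ fun j _ => ?_)
      (Finset.measurable_prod _ fun j _ => ?_)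
    · exact hCj.comp ((ht1.comp measurable_snd).prodMk
        ((measurable_pi_apply j).comp measurable_fst))
    · exact hCq.comp ((measurable_pi_apply j).comp measurable_fst)
  have hne : ∀ᵐ z ∂Q, compLik μ α β γ q z ≠ 0 := by
    have hall : ∀ᵐ z ∂Q, ∀ S, marginal μ S q z ≠ 0 ∧ marginal μ S q z ≠ ∞ :=
      ae_all_iff.2 fun S => ae_marg μ S hq (hp_prob _) x
    filter_upwards [hall] with z hz using compLik_ne μ α β γ q z hz
  have hint : ∀ y1 : E, ∫⁻ y0, F (y0, y1) ∂(Measure.pi fun _ : Fin n => Q) ≤ 1 := by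
    intro y1
    let R : (∀ i, π i) → ℝ≥0∞ := fun z =>
      compLik μ α β γ (p (t1 y1)) z / compLik μ α β γ q z
    have hR : Measurable R :=
      (hCj.comp (measurable_prodMk_left (x := t1 y1))).div hCq
    have hne' : ∀ᵐ y0 ∂(Measure.pi fun _ : Fin n => Q), ∀ j, compLik μ α β γ q (y0 j) ≠ 0 :=
      ae_all_iff.2 fun j => (Measure.tendsto_eval_ae_ae (μ := fun _ : Fin n => Q)
        (i := j)).eventually hne
    calc _ = ∫⁻ y0, ∏ j, R (y0 j) ∂(Measure.pi fun _ : Fin n => Q) := by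
          apply lintegral_congr_ae
          filter_upwards [hne'] with y0 hy
          exact (ENNReal.prod_div_distrib_of_ne_zero fun j _ => hy j).symm
      _ = ∏ j : Fin n, ∫⁻ y0, R (y0 j) ∂(Measure.pi fun _ : Fin n => Q) := by
          apply ProbabilityTheory.lintegral_prod_eq_prod_lintegral_of_indepFun
            Finset.univ (fun j (y0 : E) => R (y0 j))
          · exact ProbabilityTheory.iIndepFun_pi (X := fun _ => R) fun _ => hR.aemeasurable
          · exact fun j => hR.comp (measurable_pi_apply j)
      _ ≤ 1 := by
          apply Finset.prod_le_one'
          intro j _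
          rw [(measurePreserving_eval (fun _ : Fin n => Q) j).lintegral_comp hR]
          exact ratio_exp μ α β hα hβ γ hγ hγpos hq (hmp _) (hp_prob _) (hp_prob _) x
  have hX : Measurable (fun ω => ((fun j => X0 j ω, fun j => X1 j ω) : E × E)) :=
    (measurable_pi_lambda _ hX0).prodMk (measurable_pi_lambda _ hX1)
  have hI : ∫⁻ ω, F (fun j => X0 j ω, fun j => X1 j ω) ∂Pr ≤ 1 := by
    rw [← lintegral_map hF hX, hlaw, lintegral_prod_symm' _ hF]
    calc _ ≤ ∫⁻ y1 : E, 1 ∂(Measure.pi fun _ : Fin n => Q) := lintegral_mono hint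
      _ = 1 := by rw [lintegral_const, measure_univ, one_mul]
  have ha : ENNReal.ofReal a ≠ 0 := by simpa using ha0
  calc _ ≤ Pr {ω | 1 / ENNReal.ofReal a ≤ F (fun j => X0 j ω, fun j => X1 j ω)} := by
        apply measure_mono
        intro ω hω
        refine (le_of_lt hω).trans ((safeDiv_le _ _).trans ?_)
        exact ENNReal.div_le_div_left (hθhat0_max ω θstar hθstar) _
    _ ≤ (∫⁻ ω, F (fun j => X0 j ω, fun j => X1 j ω) ∂Pr) / (1 / ENNReal.ofReal a) :=
        meas_ge_le_lintegral_div (hF.comp hX).aemeasurable (by simp) (by simpa using ha0)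
    _ ≤ 1 / (1 / ENNReal.ofReal a) := by gcongr
    _ = ENNReal.ofReal a := by rw [one_div, one_div, inv_inv]
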